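/- arXiv:1508.05974 — 10 statements merged into one kernel-verified Lean document; each statement's English description precedes it below -/
import Mathlib

section
/- Let (S, L) be a partial Steiner triple system and let H₁ and H₂ be two distinct hyperplanes of (S, L). Then H₁ ⋔ H₂ is also a hyperplane of (S, L). -/
/-!
A line meets a hyperplane in one point or in all three, and a set of points with this
property on every line is a subspace meeting every line. On a line `{a, b, c}` the property
reads `(c ∈ H ↔ (a ∈ H ↔ b ∈ H))`, i.e. the indicator function of the complement of `H`, with
values in the two-element field, sums to zero over every line. Since the complement of `H₁ ⋔ H₂`
is the symmetric difference of the complements of `H₁` and `H₂`, its indicator is the sum of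
theirs, so `H₁ ⋔ H₂` inherits the property. It is proper because `H₁ ⋔ H₂ = S` would force
`H₁ = H₂`.
-/

/-- An incidence structure: a set of points and a family of lines (subsets of points). -/
structure IncStruct (α : Type*) where
  pts : Set α
  lines : Set (Set α)

/-- A partial Steiner triple system: finitely many points, every line is a 3-element
subset of the point set, and two distinct points lie on at most one common line. -/
def IsPSTS {α : Type*} (M : IncStruct α) : Prop :=
  M.pts.Finite ∧
  (∀ L ∈ M.lines, L ⊆ M.pts ∧ L.ncard = 3) ∧
  (∀ L₁ ∈ M.lines, ∀ L₂ ∈ M.lines, ∀ x y : α,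
    x ≠ y → x ∈ L₁ → y ∈ L₁ → x ∈ L₂ → y ∈ L₂ → L₁ = L₂)

/-- A subspace: every line having two distinct points in `Y` is contained in `Y`. -/
def IsSubspace {α : Type*} (M : IncStruct α) (Y : Set α) : Prop :=
  Y ⊆ M.pts ∧ ∀ L ∈ M.lines, ∀ x ∈ L ∩ Y, ∀ y ∈ L ∩ Y, x ≠ y → L ⊆ Y

/-- A hyperplane: a proper subspace meeting every line. -/
def IsHyperplane {α : Type*} (M : IncStruct α) (Y : Set α) : Prop :=
  IsSubspace M Y ∧ Y ≠ M.pts ∧ ∀ L ∈ M.lines, (L ∩ Y).Nonempty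

/-- `Y₁ ⋔ Y₂` relative to the ambient set `S`. -/
def hcap {α : Type*} (S Y₁ Y₂ : Set α) : Set α :=
  (Y₁ ∩ Y₂) ∪ ((S \ Y₁) ∩ (S \ Y₂))

/-- `℘₂(Z)`: the family of 2-element subsets of `Z`. -/
def pairs {α : Type*} (Z : Set α) : Set (Set α) :=
  {e | e ⊆ Z ∧ e.ncard = 2}

/-- `H(A | B) = ℘₂(A) ∪ ℘₂(B)`. -/
def Hgt {α : Type*} (A B : Set α) : Set (Set α) := pairs A ∪ pairs B

/-- A `B(N)`-configuration (`N = n + c`): a PSTS with `C(N,2)` points, `C(N,3)` lines,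
and each point on exactly `N - 2` lines. -/
def IsBConfig {α : Type*} (M : IncStruct α) (N : ℕ) : Prop :=
  IsPSTS M ∧ M.pts.ncard = N.choose 2 ∧ M.lines.ncard = N.choose 3 ∧
  ∀ p ∈ M.pts, {L | L ∈ M.lines ∧ p ∈ L}.ncard = N - 2

/-- `M` freely contains the complete graph `K_X`. -/
def FreelyContains {α : Type*} (M : IncStruct α) (X : Set α) : Prop :=
  X ⊆ M.pts ∧
  (∀ x ∈ X, ∀ y ∈ X, x ≠ y → ∃ L ∈ M.lines, x ∈ L ∧ y ∈ L) ∧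
  (∀ L ∈ M.lines, ∀ x ∈ L ∩ X, ∀ y ∈ L ∩ X, ∀ z ∈ L ∩ X, x = y ∨ y = z ∨ x = z) ∧
  (∀ L₁ ∈ M.lines, ∀ L₂ ∈ M.lines, ∀ a₁ ∈ X, ∀ a₂ ∈ X, ∀ b₁ ∈ X, ∀ b₂ ∈ X,
    a₁ ≠ a₂ → b₁ ≠ b₂ → ({a₁, a₂} : Set α) ∩ {b₁, b₂} = ∅ →
    a₁ ∈ L₁ → a₂ ∈ L₁ → b₁ ∈ L₂ → b₂ ∈ L₂ → L₁ ∩ L₂ = ∅)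

/-- Restriction of an incidence structure to a set `D` of points. -/
def restr {α : Type*} (M : IncStruct α) (D : Set α) : IncStruct α :=
  ⟨D, {L | L ∈ M.lines ∧ L ⊆ D}⟩

/-- Isomorphism of incidence structures: a bijection between the point sets
mapping the lines of one structure exactly onto the lines of the other. -/
def IsIso {α β : Type*} (M : IncStruct α) (N : IncStruct β) : Prop :=
  ∃ φ : α → β, Set.BijOn φ M.pts N.pts ∧ (fun L => φ '' L) '' M.lines = N.lines

/-- The generalized Desargues configuration `G(X,2)`. -/
def Gdes {α : Type*} (X : Set α) : IncStruct (Set α) :=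
  ⟨pairs X, {L | ∃ Z ⊆ X, Z.ncard = 3 ∧ L = pairs Z}⟩

/-- A hyperplane meets a line with three points in one point or in all three. -/
theorem IsHyperplane.mem_iff_of_line {α : Type*} {M : IncStruct α} {H : Set α}
    (h : IsHyperplane M H) {a b c : α} (hL : ({a, b, c} : Set α) ∈ M.lines)
    (hab : a ≠ b) (hac : a ≠ c) (hbc : b ≠ c) : c ∈ H ↔ (a ∈ H ↔ b ∈ H) := by
  obtain ⟨⟨-, hsub⟩, -, hmeet⟩ := h
  have ha : a ∈ ({a, b, c} : Set α) := by simp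
  have hb : b ∈ ({a, b, c} : Set α) := by simp
  have hc : c ∈ ({a, b, c} : Set α) := by simp
  have hs := hsub _ hL
  have h_ab : a ∈ H → b ∈ H → c ∈ H := fun h1 h2 => hs a ⟨ha, h1⟩ b ⟨hb, h2⟩ hab hc
  have h_ac : a ∈ H → c ∈ H → b ∈ H := fun h1 h2 => hs a ⟨ha, h1⟩ c ⟨hc, h2⟩ hac hb
  have h_bc : b ∈ H → c ∈ H → a ∈ H := fun h1 h2 => hs b ⟨hb, h1⟩ c ⟨hc, h2⟩ hbc ha
  have h_some : a ∈ H ∨ b ∈ H ∨ c ∈ H := by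
    obtain ⟨x, hx, hxH⟩ := hmeet _ hL
    rcases hx with rfl | rfl | rfl <;> simp_all
  tauto

/-- Among the points of the ambient set, `Y₁ ⋔ Y₂` consists of those on which the
membership predicates of `Y₁` and `Y₂` agree. -/
theorem mem_hcap_iff {α : Type*} {S Y₁ Y₂ : Set α} {x : α} (hx : x ∈ S) :
    x ∈ hcap S Y₁ Y₂ ↔ (x ∈ Y₁ ↔ x ∈ Y₂) := by
  simp only [hcap, Set.mem_union, Set.mem_inter_iff, Set.mem_sdiff]
  tauto

/-- If `H₁ ≠ H₂` are hyperplanes of a PSTS `(S, L)`,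
then `H₁ ⋔ H₂` is a hyperplane as well. -/
theorem stmt_0 {α : Type*} (M : IncStruct α) (hM : IsPSTS M)
    (H₁ H₂ : Set α) (h₁ : IsHyperplane M H₁) (h₂ : IsHyperplane M H₂)
    (hne : H₁ ≠ H₂) :
    IsHyperplane M (hcap M.pts H₁ H₂) := by
  have key : ∀ a b c : α, ({a, b, c} : Set α) ∈ M.lines → a ≠ b → a ≠ c → b ≠ c →
      (c ∈ hcap M.pts H₁ H₂ ↔ (a ∈ hcap M.pts H₁ H₂ ↔ b ∈ hcap M.pts H₁ H₂)) := by
    intro a b c hL hab hac hbc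
    have hS := (hM.2.1 _ hL).1
    rw [mem_hcap_iff (hS (by simp : a ∈ _)), mem_hcap_iff (hS (by simp : b ∈ _)),
      mem_hcap_iff (hS (by simp : c ∈ _)), h₁.mem_iff_of_line hL hab hac hbc,
      h₂.mem_iff_of_line hL hab hac hbc]
    tauto
  refine ⟨⟨?_, ?_⟩, ?_, ?_⟩
  · rintro x (hx | hx)
    · exact h₁.1.1 hx.1
    · exact hx.1.1
  · intro L hL x hx y hy hxy
    obtain ⟨a, b, c, hab, hac, hbc, rfl⟩ := Set.ncard_eq_three.mp (hM.2.1 L hL).2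
    have hk := key a b c hL hab hac hbc
    obtain ⟨hxL, hxH⟩ := hx
    obtain ⟨hyL, hyH⟩ := hy
    simp only [Set.insert_subset_iff, Set.singleton_subset_iff]
    rcases hxL with rfl | rfl | rfl <;> rcases hyL with rfl | rfl | rfl <;> simp_all
  · intro heq
    apply hne
    ext x
    by_cases hx : x ∈ M.pts
    · exact (mem_hcap_iff hx).mp (heq.symm.subset hx)
    · exact ⟨fun h => absurd (h₁.1.1 h) hx, fun h => absurd (h₂.1.1 h) hx⟩
  · intro L hL
    obtain ⟨a, b, c, hab, hac, hbc, rfl⟩ := Set.ncard_eq_three.mp (hM.2.1 L hL).2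
    have hk := key a b c hL hab hac hbc
    by_cases ha : a ∈ hcap M.pts H₁ H₂
    · exact ⟨a, by simp, ha⟩
    by_cases hb : b ∈ hcap M.pts H₁ H₂
    · exact ⟨b, by simp, hb⟩
    exact ⟨c, by simp, hk.mpr (by tauto)⟩
end

section
/- For every partial Steiner triple system 𝔐 = (S, L) there exists an integer m ≥ 0 such that the number of hyperplanes of 𝔐 is exactly 2^m − 1. -/
/-- The `ZMod 2`-space of functions on the points that sum to zero along every line. A line is
given by an enumeration of three pairwise distinct points. -/
def lineZeroSum {α : Type*} (M : IncStruct α) : Submodule (ZMod 2) (M.pts → ZMod 2) where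
  carrier := {f | ∀ x y z : M.pts, x ≠ y → x ≠ z → y ≠ z →
    ({x.1, y.1, z.1} : Set α) ∈ M.lines → f x + f y + f z = 0}
  zero_mem' := by intro x y z _ _ _ _; simp
  add_mem' := by
    intro f g hf hg x y z h1 h2 h3 hL
    have h := hf x y z h1 h2 h3 hL
    have h' := hg x y z h1 h2 h3 hL
    simp only [Pi.add_apply]
    linear_combination h + h'
  smul_mem' := by
    intro c f hf x y z h1 h2 h3 hL
    have h := hf x y z h1 h2 h3 hL
    simp only [Pi.smul_apply, smul_eq_mul]
    linear_combination c * h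

/-- The set of points, viewed in the ambient type, where a function vanishes. -/
def zeroLocus {α : Type*} (M : IncStruct α) (f : M.pts → ZMod 2) : Set α :=
  {x | ∃ h : x ∈ M.pts, f ⟨x, h⟩ = 0}

theorem zeroLocus_injective {α : Type*} (M : IncStruct α) :
    Function.Injective (zeroLocus M) := by
  intro f g h
  funext x
  have hx : f x = 0 ↔ g x = 0 := by
    have := Set.ext_iff.1 h x.1
    simpa [zeroLocus] using this
  -- An element of `ZMod 2` is determined by whether it is zero.
  have key : ∀ a b : ZMod 2, (a = 0 ↔ b = 0) → a = b := by decide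
  exact key _ _ hx

theorem isHyperplane_zeroLocus {α : Type*} {M : IncStruct α} (hM : IsPSTS M)
    {f : M.pts → ZMod 2} (hf : f ∈ lineZeroSum M) (h0 : f ≠ 0) :
    IsHyperplane M (zeroLocus M f) := by
  have two : ∀ a b c : ZMod 2, a + b + c = 0 →
      (a = 0 ∧ b = 0 ∧ c = 0) ∨ (a = 0 ∧ b ≠ 0 ∧ c ≠ 0) ∨ (a ≠ 0 ∧ b = 0 ∧ c ≠ 0) ∨
        (a ≠ 0 ∧ b ≠ 0 ∧ c = 0) := by decide
  have key : ∀ L ∈ M.lines, L ⊆ zeroLocus M f ∨ ∃ p ∈ L, L ∩ zeroLocus M f = {p} := by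
    intro L hL
    obtain ⟨hs, hc⟩ := hM.2.1 L hL
    obtain ⟨x, y, z, hxy, hxz, hyz, rfl⟩ := Set.ncard_eq_three.1 hc
    have hx : x ∈ M.pts := hs (by simp)
    have hy : y ∈ M.pts := hs (by simp)
    have hz : z ∈ M.pts := hs (by simp)
    have h := hf ⟨x, hx⟩ ⟨y, hy⟩ ⟨z, hz⟩ (by simpa using hxy) (by simpa using hxz)
      (by simpa using hyz) hL
    have ex : x ∈ zeroLocus M f ↔ f ⟨x, hx⟩ = 0 := by simp [zeroLocus, hx]
    have ey : y ∈ zeroLocus M f ↔ f ⟨y, hy⟩ = 0 := by simp [zeroLocus, hy]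
    have ez : z ∈ zeroLocus M f ↔ f ⟨z, hz⟩ = 0 := by simp [zeroLocus, hz]
    have h' := two _ _ _ h
    rw [← ex, ← ey, ← ez] at h'
    rcases h' with h' | h' | h' | h'
    · left
      rintro w (rfl | rfl | rfl)
      exacts [h'.1, h'.2.1, h'.2.2]
    · right
      refine ⟨x, by simp, ?_⟩
      ext w
      simp only [Set.mem_inter_iff, Set.mem_insert_iff, Set.mem_singleton_iff]
      grind
    · right
      refine ⟨y, by simp, ?_⟩
      ext w
      simp only [Set.mem_inter_iff, Set.mem_insert_iff, Set.mem_singleton_iff]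
      grind
    · right
      refine ⟨z, by simp, ?_⟩
      ext w
      simp only [Set.mem_inter_iff, Set.mem_insert_iff, Set.mem_singleton_iff]
      grind
  refine ⟨⟨fun x hx => hx.1, ?_⟩, ?_, ?_⟩
  · intro L hL x hx y hy hxy
    rcases key L hL with h | ⟨p, -, h⟩
    · exact h
    · rw [h] at hx hy
      exact absurd (hx.trans hy.symm) hxy
  · intro h
    apply h0
    funext x
    have hx : x.1 ∈ zeroLocus M f := by rw [h]; exact x.2
    exact hx.2
  · intro L hL
    rcases key L hL with h | ⟨p, -, h⟩
    · have hne : L.Nonempty := Set.nonempty_of_ncard_ne_zero (by rw [(hM.2.1 L hL).2]; norm_num)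
      exact hne.imp fun p hp => ⟨hp, h hp⟩
    · rw [h]
      exact Set.singleton_nonempty p

theorem exists_zeroLocus_eq {α : Type*} {M : IncStruct α} {H : Set α} (hH : IsHyperplane M H) :
    ∃ f ∈ lineZeroSum M, f ≠ 0 ∧ zeroLocus M f = H := by
  classical
  obtain ⟨⟨hsub, hline⟩, hne, hmeet⟩ := hH
  have hz : zeroLocus M (fun x => if x.1 ∈ H then 0 else 1) = H := by
    ext x
    constructor
    · rintro ⟨_, h⟩
      by_contra hx
      simp [hx] at h
    · intro hx
      exact ⟨hsub hx, by simp [hx]⟩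
  refine ⟨fun x => if x.1 ∈ H then 0 else 1, ?_, ?_, hz⟩
  · intro x y z hxy hxz hyz hL
    have hxy' : x.1 ≠ y.1 := fun h => hxy (Subtype.ext h)
    have hxz' : x.1 ≠ z.1 := fun h => hxz (Subtype.ext h)
    have hyz' : y.1 ≠ z.1 := fun h => hyz (Subtype.ext h)
    have a1 : x.1 ∈ H → y.1 ∈ H → z.1 ∈ H := fun h1 h2 =>
      hline _ hL _ ⟨by simp, h1⟩ _ ⟨by simp, h2⟩ hxy' (by simp)
    have a2 : x.1 ∈ H → z.1 ∈ H → y.1 ∈ H := fun h1 h2 =>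
      hline _ hL _ ⟨by simp, h1⟩ _ ⟨by simp, h2⟩ hxz' (by simp)
    have a3 : y.1 ∈ H → z.1 ∈ H → x.1 ∈ H := fun h1 h2 =>
      hline _ hL _ ⟨by simp, h1⟩ _ ⟨by simp, h2⟩ hyz' (by simp)
    have a4 : x.1 ∈ H ∨ y.1 ∈ H ∨ z.1 ∈ H := by
      obtain ⟨w, rfl | rfl | rfl, hw⟩ := hmeet _ hL <;> simp [hw]
    have one_add_one : (1 : ZMod 2) + 1 = 0 := by decide
    by_cases h1 : x.1 ∈ H <;> by_cases h2 : y.1 ∈ H <;> by_cases h3 : z.1 ∈ H <;>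
      simp_all
  · intro h0
    apply hne
    rw [← hz, h0]
    ext x
    simp [zeroLocus]

/-- For every PSTS `𝔐` there is `m ≥ 0` with exactly `2^m - 1` hyperplanes. -/
theorem stmt_1 {α : Type*} (M : IncStruct α) (hM : IsPSTS M) :
    ∃ m : ℕ, {H : Set α | IsHyperplane M H}.ncard = 2 ^ m - 1 := by
  have : Finite M.pts := hM.1
  have himg : {H : Set α | IsHyperplane M H} =
      zeroLocus M '' ((lineZeroSum M : Set (M.pts → ZMod 2)) \ {0}) := by
    ext H
    constructor
    · intro hH
      obtain ⟨f, hf, h0, rfl⟩ := exists_zeroLocus_eq hH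
      exact ⟨f, ⟨hf, h0⟩, rfl⟩
    · rintro ⟨f, ⟨hf, h0⟩, rfl⟩
      exact isHyperplane_zeroLocus hM hf h0
  refine ⟨Module.finrank (ZMod 2) (lineZeroSum M), ?_⟩
  rw [himg, Set.ncard_image_of_injective _ (zeroLocus_injective M),
    Set.ncard_sdiff_singleton_of_mem (zero_mem (lineZeroSum M))]
  congr 1
  have hcard := Module.natCard_eq_pow_finrank (K := ZMod 2) (V := lineZeroSum M)
  rw [Nat.card_zmod] at hcard
  exact hcard
end

section
/- Let n ≥ 2, let 𝔐 = (S, L) be a B(n,1)-configuration, and let X ⊆ S with |X| = n be such that 𝔐 freely contains the complete graph K_X. Then Y = S \ X is a hyperplane of 𝔐. -/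
/-- A line through a point `x` of `X` contains a second point of `X`. -/
lemma exists_second_point {α : Type*} {n : ℕ} (hn : 2 ≤ n) {M : IncStruct α}
    (hM : IsBConfig M (n + 1)) {X : Set α} (hXcard : X.ncard = n)
    (hfree : FreelyContains M X) {x : α} (hx : x ∈ X) {L : Set α} (hL : L ∈ M.lines)
    (hxL : x ∈ L) : ∃ y ∈ X, y ≠ x ∧ y ∈ L := by
  obtain ⟨⟨hfin, hlines, -⟩, -, -, hdeg⟩ := hM
  obtain ⟨hsub, hjoin, hthree, -⟩ := hfree
  have hjoin' : ∀ y, ∃ K, y ∈ X \ {x} → K ∈ M.lines ∧ x ∈ K ∧ y ∈ K := by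
    intro y
    by_cases hy : y ∈ X \ {x}
    · obtain ⟨K, hK⟩ := hjoin x hx y hy.1 (Ne.symm hy.2)
      exact ⟨K, fun _ => hK⟩
    · exact ⟨∅, fun h => absurd h hy⟩
  choose f hf using hjoin'
  have hinj : Set.InjOn f (X \ {x}) := by
    intro y hy z hz hyz
    obtain ⟨hK, hxK, hyK⟩ := hf y hy
    have hzK := (hf z hz).2.2
    rw [← hyz] at hzK
    rcases hthree _ hK x ⟨hxK, hx⟩ y ⟨hyK, hy.1⟩ z ⟨hzK, hz.1⟩ with h | h | h
    · exact absurd h.symm hy.2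
    · exact h
    · exact absurd h.symm hz.2
  have himage : f '' (X \ {x}) ⊆ {L | L ∈ M.lines ∧ x ∈ L} := by
    rintro _ ⟨y, hy, rfl⟩
    exact ⟨(hf y hy).1, (hf y hy).2.1⟩
  have hfinL : {L | L ∈ M.lines ∧ x ∈ L}.Finite :=
    hfin.finite_subsets.subset fun K hK => (hlines K hK.1).1
  have hcard : {L | L ∈ M.lines ∧ x ∈ L}.ncard ≤ (f '' (X \ {x})).ncard := by
    rw [hinj.ncard_image, Set.ncard_sdiff_singleton_of_mem hx, hdeg x (hsub hx)]
    omega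
  have heq := Set.eq_of_subset_of_ncard_le himage hcard hfinL
  have hLmem : L ∈ f '' (X \ {x}) := heq ▸ (⟨hL, hxL⟩ : L ∈ {L | L ∈ M.lines ∧ x ∈ L})
  obtain ⟨y, hy, rfl⟩ := hLmem
  exact ⟨y, hy.1, hy.2, (hf y hy).2.2⟩

/-- If a `B(n,1)`-configuration `𝔐` freely contains `K_X` with `|X| = n ≥ 2`,
then `Y = S \ X` is a hyperplane of `𝔐`. -/
theorem stmt_3 {α : Type*} (n : ℕ) (hn : 2 ≤ n) (M : IncStruct α)
    (hM : IsBConfig M (n + 1)) (X : Set α) (hXcard : X.ncard = n)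
    (hXsub : X ⊆ M.pts) (hfree : FreelyContains M X) :
    IsHyperplane M (M.pts \ X) := by
  have hlines := hM.1.2.1
  refine ⟨⟨Set.sdiff_subset, ?_⟩, ?_, ?_⟩
  · rintro L hL x ⟨hxL, -, hxX⟩ y ⟨hyL, -, hyX⟩ hxy z hzL
    refine ⟨(hlines L hL).1 hzL, fun hzX => ?_⟩
    obtain ⟨w, hwX, hwz, hwL⟩ := exists_second_point hn hM hXcard hfree hzX hL hzL
    obtain ⟨a, b, c, -, -, -, rfl⟩ := Set.ncard_eq_three.mp (hlines L hL).2
    -- Two points in `X` and two outside `X` cannot fit among `a`, `b`, `c`.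
    simp only [Set.mem_insert_iff, Set.mem_singleton_iff] at hxL hyL hzL hwL
    grind
  · intro h
    obtain ⟨x, hx⟩ : X.Nonempty := Set.nonempty_of_ncard_ne_zero (by omega)
    have hx' : x ∈ M.pts \ X := h.symm ▸ hXsub hx
    exact hx'.2 hx
  · intro L hL
    by_contra hempty
    have hLX : ∀ p ∈ L, p ∈ X := fun p hp => by
      by_contra hpX
      exact hempty ⟨p, hp, (hlines L hL).1 hp, hpX⟩
    obtain ⟨a, b, c, hab, hac, hbc, rfl⟩ := Set.ncard_eq_three.mp (hlines L hL).2
    have ha : a ∈ ({a, b, c} : Set α) := by simp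
    have hb : b ∈ ({a, b, c} : Set α) := by simp
    have hc : c ∈ ({a, b, c} : Set α) := by simp
    rcases hfree.2.2.1 _ hL a ⟨ha, hLX a ha⟩ b ⟨hb, hLX b hb⟩ c ⟨hc, hLX c hc⟩ with h | h | h
    · exact hab h
    · exact hbc h
    · exact hac h
end

section
/- Let n ≥ 4 and let 𝔐 = (S, L) be a B(n,0)-configuration. Let X₁ ≠ X₂ be (n−1)-element subsets of S such that 𝔐 freely contains the complete graphs K_{X₁} and K_{X₂}, and set Y᷀ᵢ = S \ Xᵢ for i = 1, 2. Then Y₁ ⋔ Y₂ is a hyperplane of 𝔐 which is not the complement of any complete subgraph of 𝔐: there exist two distinct points of S \ (Y₁ ⋔ Y₂) that do not lie on a common line of 𝔐. -/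
/-- Every line meets `X` in an even number of points, i.e. in `0` or `2` points: among the three
points of a line, one lies in `X` iff exactly one of the other two does. -/
def MeetsEvenly {α : Type*} (M : IncStruct α) (X : Set α) : Prop :=
  ∀ p q r : α, p ≠ q → p ≠ r → q ≠ r → ({p, q, r} : Set α) ∈ M.lines →
    (p ∈ X ↔ (q ∈ X ↔ r ∉ X))

theorem exists_third {α : Type*} {M : IncStruct α} (hM : IsPSTS M) {L : Set α}
    (hL : L ∈ M.lines) {x y : α} (hx : x ∈ L) (hy : y ∈ L) (hxy : x ≠ y) :
    ∃ z, x ≠ z ∧ y ≠ z ∧ L = {x, y, z} := by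
  obtain ⟨p, q, r, hpq, hpr, hqr, rfl⟩ := Set.ncard_eq_three.1 (hM.2.1 L hL).2
  have key : ∀ s : α, s ∈ ({p, q, r} : Set α) → x ≠ s → y ≠ s →
      ∃ z, x ≠ z ∧ y ≠ z ∧ ({p, q, r} : Set α) = {x, y, z} := by
    intro s hs hxs hys
    refine ⟨s, hxs, hys, ?_⟩
    ext t
    simp only [Set.mem_insert_iff, Set.mem_singleton_iff] at *
    grind
  simp only [Set.mem_insert_iff, Set.mem_singleton_iff] at hx hy key
  by_cases hp : x ≠ p ∧ y ≠ p
  · exact key p (by simp) hp.1 hp.2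
  by_cases hq : x ≠ q ∧ y ≠ q
  · exact key q (by simp) hq.1 hq.2
  · exact key r (by simp) (by grind) (by grind)

/-- The lines joining `x` to the other points of a set `X` of pairwise collinear points, no three of
them on a line, are distinct. -/
theorem exists_star {α : Type*} {M : IncStruct α} {X : Set α} {x : α} (hx : x ∈ X)
    (hX : X.Finite)
    (hcol : ∀ y ∈ X, x ≠ y → ∃ L ∈ M.lines, x ∈ L ∧ y ∈ L)
    (hthree : ∀ L ∈ M.lines, ∀ x ∈ L ∩ X, ∀ y ∈ L ∩ X, ∀ z ∈ L ∩ X, x = y ∨ y = z ∨ x = z) :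
    ∃ T ⊆ {L | L ∈ M.lines ∧ x ∈ L}, T.ncard + 1 = X.ncard ∧
      ∀ L ∈ T, ∃ y ∈ L ∩ X, x ≠ y := by
  choose! f hf using hcol
  have hmem : ∀ y ∈ X \ {x}, y ∈ X ∧ x ≠ y := fun y hy => ⟨hy.1, fun h => hy.2 h.symm⟩
  refine ⟨f '' (X \ {x}), ?_, ?_, ?_⟩
  · rintro _ ⟨y, hy, rfl⟩
    have h := hf y (hmem y hy).1 (hmem y hy).2
    exact ⟨h.1, h.2.1⟩
  · rw [Set.InjOn.ncard_image, Set.ncard_sdiff_singleton_add_one hx hX]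
    intro y hy z hz hyz
    have h₁ := hf y (hmem y hy).1 (hmem y hy).2
    have h₂ := hf z (hmem z hz).1 (hmem z hz).2
    rw [← hyz] at h₂
    rcases hthree _ h₁.1 x ⟨h₁.2.1, hx⟩ y ⟨h₁.2.2, hy.1⟩ z ⟨h₂.2.2, hz.1⟩ with h | h | h
    · exact absurd h (hmem y hy).2
    · exact h
    · exact absurd h (hmem z hz).2
  · rintro _ ⟨y, hy, rfl⟩
    exact ⟨y, ⟨(hf y (hmem y hy).1 (hmem y hy).2).2.2, hy.1⟩, (hmem y hy).2⟩

/-- The joining lines exhaust all lines through a vertex of the graph, so a line meeting `X` meets it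
in exactly two points. -/
theorem even_of_free {α : Type*} {n : ℕ} (hn : 4 ≤ n) {M : IncStruct α}
    (hM : IsBConfig M n) {X : Set α} (hc : X.ncard = n - 1) (hf : FreelyContains M X) :
    MeetsEvenly M X := by
  have second : ∀ L ∈ M.lines, ∀ x ∈ L ∩ X, ∃ y ∈ L ∩ X, x ≠ y := by
    intro L hL x hx
    obtain ⟨T, hT, hTc, hTy⟩ := exists_star hx.2 (hM.1.1.subset hf.1) (hf.2.1 x hx.2) hf.2.2.1
    have hdeg := hM.2.2.2 x (hf.1 hx.2)
    -- `T` has `n - 2` lines, which is the total number of lines through `x`.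
    have hTeq := Set.eq_of_subset_of_ncard_le hT (by omega)
      (Set.finite_of_ncard_ne_zero (by omega))
    exact hTy L (hTeq ▸ ⟨hL, hx.1⟩)
  intro p q r hpq hpr hqr hL
  have h₂ := second _ hL
  have h₃ := hf.2.2.1 _ hL
  simp only [Set.mem_inter_iff, Set.mem_insert_iff, Set.mem_singleton_iff] at h₂ h₃
  have hp := h₂ p
  have hq := h₂ q
  have hr := h₂ r
  have h := h₃ p
  grind

/-- Two freely contained graphs with equally many vertices that every line meets evenly share at
most one vertex. -/
theorem inter_subsingleton {α : Type*} {M : IncStruct α} (hM : IsPSTS M) {X₁ X₂ : Set α}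
    (hf₁ : FreelyContains M X₁) (hf₂ : FreelyContains M X₂)
    (he₁ : MeetsEvenly M X₁) (he₂ : MeetsEvenly M X₂)
    (hne : X₁ ≠ X₂) (hc : X₁.ncard = X₂.ncard) : (X₁ ∩ X₂).Subsingleton := by
  intro a ha b hb
  by_contra hab
  obtain ⟨x, hx₁, hx₂⟩ : ∃ x ∈ X₁, x ∉ X₂ := by
    by_contra! h
    exact hne (Set.eq_of_subset_of_ncard_le h hc.ge (hM.1.subset hf₂.1))
  have hxa : x ≠ a := fun h => hx₂ (h ▸ ha.2)
  have hxb : x ≠ b := fun h => hx₂ (h ▸ hb.2)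
  obtain ⟨L₁, hL₁, hxL, haL⟩ := hf₁.2.1 x hx₁ a ha.1 hxa
  obtain ⟨y, hxy, hay, rfl⟩ := exists_third hM hL₁ hxL haL hxa
  have hy₁ : y ∉ X₁ := ((he₁ x a y hxa hxy hay hL₁).1 hx₁).1 ha.1
  have hy₂ : y ∈ X₂ := by
    by_contra hy
    exact hx₂ ((he₂ x a y hxa hxy hay hL₁).2 ⟨fun _ => hy, fun _ => ha.2⟩)
  have hyb : y ≠ b := fun h => hy₁ (h ▸ hb.1)
  obtain ⟨L₂, hL₂, hyL, hbL⟩ := hf₂.2.1 y hy₂ b hb.2 hyb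
  obtain ⟨z, hyz, hbz, rfl⟩ := exists_third hM hL₂ hyL hbL hyb
  have hz₁ : z ∈ X₁ := by
    by_contra hz
    exact hy₁ ((he₁ y b z hyb hyz hbz hL₂).2 ⟨fun _ => hz, fun _ => hb.1⟩)
  have hz₂ : z ∉ X₂ := ((he₂ y b z hyb hyz hbz hL₂).1 hy₂).1 hb.2
  -- If `x = z`, both lines contain `x` and `y`, so they coincide and contain `x, a, b, y`.
  have hxz : x ≠ z := by
    rintro rfl
    have h := hM.2.2 _ hL₁ _ hL₂ x y hxy (by simp) (by simp) (by simp) (by simp)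
    have hb' : b ∈ ({x, a, y} : Set α) := h ▸ hbL
    simp only [Set.mem_insert_iff, Set.mem_singleton_iff] at hb'
    grind
  have hza : z ≠ a := fun h => hz₂ (h ▸ ha.2)
  -- The edges `{x, a}` and `{z, b}` of `K_{X₁}` are disjoint, yet their lines share `y`.
  have hdisj : ({x, a} : Set α) ∩ {z, b} = ∅ := by
    ext t
    simp only [Set.mem_inter_iff, Set.mem_insert_iff, Set.mem_singleton_iff,
      Set.mem_empty_iff_false, iff_false]
    grind
  have h := hf₁.2.2.2 _ hL₁ _ hL₂ x hx₁ a ha.1 z hz₁ b hb.1 hxa hbz.symm hdisj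
    (by simp) (by simp) (by simp) (by simp)
  exact Set.eq_empty_iff_forall_notMem.1 h y ⟨by simp, by simp⟩

/-- In a `B(n,0)`-configuration (`n ≥ 4`), if `Y₁, Y₂` are complements of two
distinct freely contained complete `K_{n-1}`-graphs, then `Y₁ ⋔ Y₂` is a hyperplane which is
not the complement of any complete subgraph: two distinct points of the complement of
`Y₁ ⋔ Y₂` lie on no common line. -/
theorem stmt_4 {α : Type*} (n : ℕ) (hn : 4 ≤ n) (M : IncStruct α)
    (hM : IsBConfig M n) (X₁ X₂ : Set α) (hne : X₁ ≠ X₂)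
    (hc₁ : X₁.ncard = n - 1) (hc₂ : X₂.ncard = n - 1)
    (hf₁ : FreelyContains M X₁) (hf₂ : FreelyContains M X₂) :
    IsHyperplane M (hcap M.pts (M.pts \ X₁) (M.pts \ X₂)) ∧
    ∃ x ∈ M.pts \ hcap M.pts (M.pts \ X₁) (M.pts \ X₂),
      ∃ y ∈ M.pts \ hcap M.pts (M.pts \ X₁) (M.pts \ X₂),
        x ≠ y ∧ ¬∃ L ∈ M.lines, x ∈ L ∧ y ∈ L := by
  have he₁ := even_of_free hn hM hc₁ hf₁
  have he₂ := even_of_free hn hM hc₂ hf₂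
  have hsub := inter_subsingleton hM.1 hf₁ hf₂ he₁ he₂ hne (hc₁.trans hc₂.symm)
  set D : Set α := (X₁ \ X₂) ∪ (X₂ \ X₁) with hD
  have hDpts : D ⊆ M.pts :=
    Set.union_subset (Set.sdiff_subset.trans hf₁.1) (Set.sdiff_subset.trans hf₂.1)
  have hcapD : hcap M.pts (M.pts \ X₁) (M.pts \ X₂) = M.pts \ D := by
    ext t
    have := @hf₁.1 t
    have := @hf₂.1 t
    simp only [hcap, hD, Set.mem_union, Set.mem_inter_iff, Set.mem_sdiff]
    tauto
  have heD : MeetsEvenly M D := by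
    intro p q r hpq hpr hqr hL
    have h₁ := he₁ p q r hpq hpr hqr hL
    have h₂ := he₂ p q r hpq hpr hqr hL
    simp only [hD, Set.mem_union, Set.mem_sdiff]
    tauto
  have hthree : ∀ L ∈ M.lines, ∀ x ∈ L ∩ D, ∀ y ∈ L ∩ D, ∀ z ∈ L ∩ D,
      x = y ∨ y = z ∨ x = z := by
    intro L hL x hx y hy z hz
    by_contra! h
    obtain ⟨w, hxw, hyw, rfl⟩ := exists_third hM.1 hL hx.1 hy.1 h.1
    have hzw : z = w := by
      have := hz.1
      simp only [Set.mem_insert_iff, Set.mem_singleton_iff] at this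
      grind
    subst hzw
    exact ((heD x y z h.1 hxw hyw hL).1 hx.2).1 hy.2 hz.2
  have hDcard : 2 * (n - 2) ≤ D.ncard := by
    have hfin₁ := hM.1.1.subset hf₁.1
    have hfin₂ := hM.1.1.subset hf₂.1
    have hi := (Set.ncard_le_one (hfin₁.inter_of_left X₂)).2
      fun a ha b hb => hsub ha hb
    have h₁ := Set.ncard_inter_add_ncard_sdiff_eq_ncard X₁ X₂ hfin₁
    have h₂ := Set.ncard_inter_add_ncard_sdiff_eq_ncard X₂ X₁ hfin₂
    rw [Set.inter_comm] at h₂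
    have hu : D.ncard = (X₁ \ X₂).ncard + (X₂ \ X₁).ncard :=
      Set.ncard_union_eq disjoint_sdiff_sdiff hfin₁.sdiff hfin₂.sdiff
    omega
  obtain ⟨d, hd⟩ : D.Nonempty := Set.nonempty_of_ncard_ne_zero (by omega)
  rw [hcapD, Set.sdiff_sdiff_cancel_left hDpts]
  refine ⟨⟨⟨Set.sdiff_subset, ?_⟩, ?_, ?_⟩, ?_⟩
  · intro L hL x hx y hy hxy
    obtain ⟨z, hxz, hyz, rfl⟩ := exists_third hM.1 hL hx.1 hy.1 hxy
    have hz : z ∉ D := fun hz =>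
      hx.2.2 ((heD x y z hxy hxz hyz hL).2 ⟨fun h => absurd h hy.2.2, fun h => absurd hz h⟩)
    rintro t ht
    refine ⟨(hM.1.2.1 _ hL).1 ht, ?_⟩
    rcases ht with rfl | rfl | rfl
    exacts [hx.2.2, hy.2.2, hz]
  · intro h
    exact (h.symm ▸ hDpts hd : d ∈ M.pts \ D).2 hd
  · intro L hL
    obtain ⟨p, q, r, hpq, hpr, hqr, rfl⟩ := Set.ncard_eq_three.1 (hM.1.2.1 L hL).2
    by_contra! h
    have hall : ∀ t ∈ ({p, q, r} : Set α), t ∈ D := by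
      intro t ht
      by_contra htD
      exact Set.eq_empty_iff_forall_notMem.1 h t ⟨ht, (hM.1.2.1 _ hL).1 ht, htD⟩
    have := hthree _ hL p ⟨by simp, hall p (by simp)⟩ q ⟨by simp, hall q (by simp)⟩
      r ⟨by simp, hall r (by simp)⟩
    tauto
  -- A clique `D` would give `|D| - 1` lines through `d`, which lies on only `n - 2` lines.
  · by_contra! hcon
    obtain ⟨T, hT, hTc, -⟩ := exists_star hd (hM.1.1.subset hDpts)
      (fun y hy hxy => hcon d hd y hy hxy) hthree
    have hdeg := hM.2.2.2 d (hDpts hd)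
    have hle := Set.ncard_le_ncard hT (Set.finite_of_ncard_ne_zero (by omega))
    omega
end

section
/- Let 𝔐 = K_X +^μ 𝔙, let H be a hyperplane of 𝔐, set H₀ = H ∩ V, and define the relation ∼ on X by: x ∼ y iff x = y, or x ≠ y and μ({x,y}) ∈ H₀. Then ∼ is an equivalence relation on X. -/
/-- The configuration `K_X +^μ 𝔙`: point set `X ∪ V`, lines those of `𝔙` together with
the sets `{x, y, μ({x,y})}` for 2-subsets `{x,y}` of `X`. -/
def KPlus {α : Type*} (X V : Set α) (G : Set (Set α)) (μ : Set α → α) :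
    IncStruct α :=
  ⟨X ∪ V, G ∪ {L | ∃ x ∈ X, ∃ y ∈ X, x ≠ y ∧ L = {x, y, μ {x, y}}}⟩

/-- The relation `∼` on `X`: `x ∼ y` iff `x = y`, or `x ≠ y` and `μ({x,y}) ∈ H₀`. -/
def simRel {α : Type*} (μ : Set α → α) (H₀ : Set α) (x y : α) : Prop :=
  x = y ∨ (x ≠ y ∧ μ {x, y} ∈ H₀)

theorem mu_mem_hyperplane_iff {α : Type*} {X V : Set α} {G : Set (Set α)}
    (hdisj : X ∩ V = ∅) {μ : Set α → α} (hμ : Set.BijOn μ (pairs X) V)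
    {H : Set α} (hH : IsHyperplane (KPlus X V G μ) H)
    {x y : α} (hx : x ∈ X) (hy : y ∈ X) (hxy : x ≠ y) :
    μ {x, y} ∈ V ∧ (μ {x, y} ∈ H ↔ (x ∈ H ↔ y ∈ H)) := by
  have hmV : μ {x, y} ∈ V :=
    hμ.mapsTo ⟨Set.pair_subset hx hy, Set.ncard_pair hxy⟩
  have hne : ∀ z ∈ X, z ≠ μ {x, y} := by
    rintro z hz h
    have hzm : z ∈ X ∩ V := ⟨hz, h ▸ hmV⟩
    simp [hdisj] at hzm
  obtain ⟨⟨-, hsub⟩, -, hmeet⟩ := hH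
  have hL : ({x, y, μ {x, y}} : Set α) ∈ (KPlus X V G μ).lines :=
    Or.inr ⟨x, hx, y, hy, hxy, rfl⟩
  have hxL : x ∈ ({x, y, μ {x, y}} : Set α) := by simp
  have hyL : y ∈ ({x, y, μ {x, y}} : Set α) := by simp
  have hmL : μ {x, y} ∈ ({x, y, μ {x, y}} : Set α) := by simp
  have s := hsub _ hL
  refine ⟨hmV, fun hm => ⟨fun h => ?_, fun h => ?_⟩, fun h => ?_⟩
  · exact s x ⟨hxL, h⟩ _ ⟨hmL, hm⟩ (hne x hx) hyL
  · exact s y ⟨hyL, h⟩ _ ⟨hmL, hm⟩ (hne y hy) hxL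
  · obtain ⟨p, hp, hpH⟩ := hmeet _ hL
    rcases hp with rfl | rfl | rfl
    · exact s _ ⟨hxL, hpH⟩ _ ⟨hyL, h.1 hpH⟩ hxy hmL
    · exact s _ ⟨hxL, h.2 hpH⟩ _ ⟨hyL, hpH⟩ hxy hmL
    · exact hpH

theorem simRel_iff {α : Type*} {X V : Set α} {G : Set (Set α)}
    (hdisj : X ∩ V = ∅) {μ : Set α → α} (hμ : Set.BijOn μ (pairs X) V)
    {H : Set α} (hH : IsHyperplane (KPlus X V G μ) H)
    {x y : α} (hx : x ∈ X) (hy : y ∈ X) :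
    simRel μ (H ∩ V) x y ↔ (x ∈ H ↔ y ∈ H) := by
  by_cases hxy : x = y
  · simp [simRel, hxy]
  · obtain ⟨hV, hiff⟩ := mu_mem_hyperplane_iff hdisj hμ hH hx hy hxy
    simp [simRel, hxy, hV, hiff]

/-- For a hyperplane `H` of `𝔐 = K_X +^μ 𝔙`, the relation `∼`
(with `H₀ = H ∩ V`) is an equivalence relation on `X`. -/
theorem stmt_5 {α : Type*} (n : ℕ) (hn : 4 ≤ n) (X V : Set α) (G : Set (Set α))
    (hdisj : X ∩ V = ∅) (hXcard : X.ncard = n)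
    (hV : IsBConfig (IncStruct.mk V G) n)
    (μ : Set α → α) (hμ : Set.BijOn μ (pairs X) V)
    (H : Set α) (hH : IsHyperplane (KPlus X V G μ) H) :
    (∀ x ∈ X, simRel μ (H ∩ V) x x) ∧
    (∀ x ∈ X, ∀ y ∈ X, simRel μ (H ∩ V) x y → simRel μ (H ∩ V) y x) ∧
    (∀ x ∈ X, ∀ y ∈ X, ∀ z ∈ X,
      simRel μ (H ∩ V) x y → simRel μ (H ∩ V) y z → simRel μ (H ∩ V) x z) := by
  refine ⟨fun x _ => Or.inl rfl, fun x hx y hy h => ?_, fun x hx y hy z hz h₁ h₂ => ?_⟩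
  · rw [simRel_iff hdisj hμ hH hy hx]
    exact ((simRel_iff hdisj hμ hH hx hy).1 h).symm
  · rw [simRel_iff hdisj hμ hH hx hz]
    exact ((simRel_iff hdisj hμ hH hx hy).1 h₁).trans ((simRel_iff hdisj hμ hH hy hz).1 h₂)
end

section
/- Let 𝔐 = K_X +^μ 𝔙, let H be a hyperplane of 𝔐, set H₀ = H ∩ V, and define the relation ∼ on X by: x ∼ y iff x = y, or x ≠ y and μ({x,y}) ∈ H₀. If x ∈ X and the equivalence class [x]_∼ contains a point of H, then [x]_∼ ⊆ H. -/
/-- If the third point `μ {a, b}` of the line through `a, b ∈ X` lies in a subspace `H`, then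
`a ∈ H` forces `b ∈ H`: the points `a` and `μ {a, b}` are distinct, as `X` and `V` are disjoint,
so the whole line lies in `H`. -/
theorem mem_of_simRel {α : Type*} {X V : Set α} {G : Set (Set α)} (hdisj : X ∩ V = ∅)
    {μ : Set α → α} {H : Set α} (hH : IsSubspace (KPlus X V G μ) H)
    {a b : α} (ha : a ∈ X) (hb : b ∈ X) (hab : simRel μ (H ∩ V) a b) (haH : a ∈ H) :
    b ∈ H := by
  rcases hab with rfl | ⟨hne, hmH, hmV⟩
  · exact haH
  · have hane : a ≠ μ {a, b} := fun h =>
      Set.eq_empty_iff_forall_notMem.mp hdisj a ⟨ha, h ▸ hmV⟩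
    have hL : ({a, b, μ {a, b}} : Set α) ∈ (KPlus X V G μ).lines :=
      Or.inr ⟨a, ha, b, hb, hne, rfl⟩
    exact hH.2 _ hL a ⟨by simp, haH⟩ (μ {a, b}) ⟨by simp, hmH⟩ hane (by simp)

theorem simRel_symm {α : Type*} {μ : Set α → α} {H₀ : Set α} {a b : α}
    (h : simRel μ H₀ a b) : simRel μ H₀ b a := by
  rcases h with rfl | ⟨hne, hm⟩
  · exact Or.inl rfl
  · exact Or.inr ⟨hne.symm, Set.pair_comm a b ▸ hm⟩

/-- For a hyperplane `H` of `𝔐 = K_X +^μ 𝔙` and `x ∈ X`, if the class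
`[x]_∼` contains a point of `H`, then `[x]_∼ ⊆ H`. -/
theorem stmt_6 {α : Type*} (n : ℕ) (hn : 4 ≤ n) (X V : Set α) (G : Set (Set α))
    (hdisj : X ∩ V = ∅) (hXcard : X.ncard = n)
    (hV : IsBConfig (IncStruct.mk V G) n)
    (μ : Set α → α) (hμ : Set.BijOn μ (pairs X) V)
    (H : Set α) (hH : IsHyperplane (KPlus X V G μ) H)
    (x : α) (hx : x ∈ X)
    (hz : ∃ z ∈ {y | y ∈ X ∧ simRel μ (H ∩ V) x y}, z ∈ H) :
    {y | y ∈ X ∧ simRel μ (H ∩ V) x y} ⊆ H := by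
  obtain ⟨z, ⟨hzX, hxz⟩, hzH⟩ := hz
  rintro y ⟨hyX, hxy⟩
  have hxH : x ∈ H := mem_of_simRel hdisj hH.1 hzX hx (simRel_symm hxz) hzH
  exact mem_of_simRel hdisj hH.1 hx hyX hxy hxH
end

section
/- Let 𝔐 = K_X +^μ 𝔙 and let H be a hyperplane of 𝔐. Then there exist disjoint subsets 𝔞, 𝔟 of X with 𝔞 ∪ 𝔟 = X such that H = 𝔞 ∪ μ(℘₂(𝔞)) ∪ μ(℘₂(𝔟)) (where μ(℘₂(∅)) = ∅). -/
/-- Every hyperplane `H` of `𝔐 = K_X +^μ 𝔙` has the form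
`H = 𝔞 ∪ μ(℘₂(𝔞)) ∪ μ(℘₂(𝔟))` for disjoint sets `𝔞, 𝔟` with `𝔞 ∪ 𝔟 = X`. -/
theorem stmt_8 {α : Type*} (n : ℕ) (hn : 4 ≤ n) (X V : Set α) (G : Set (Set α))
    (hdisj : X ∩ V = ∅) (hXcard : X.ncard = n)
    (hV : IsBConfig (IncStruct.mk V G) n)
    (μ : Set α → α) (hμ : Set.BijOn μ (pairs X) V)
    (H : Set α) (hH : IsHyperplane (KPlus X V G μ) H) :
    ∃ a b : Set α, a ∪ b = X ∧ a ∩ b = ∅ ∧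
      H = a ∪ μ '' pairs a ∪ μ '' pairs b := by
  obtain ⟨⟨hsub, hsp⟩, -, hmeet⟩ := hH
  have hpair : ∀ x ∈ X, ∀ y ∈ X, x ≠ y → ({x, y} : Set α) ∈ pairs X := fun x hx y hy hxy =>
    ⟨by rintro z (rfl | rfl) <;> assumption, Set.ncard_pair hxy⟩
  have hline : ∀ x ∈ X, ∀ y ∈ X, x ≠ y →
      ({x, y, μ {x, y}} : Set α) ∈ (KPlus X V G μ).lines := fun x hx y hy hxy =>
    Or.inr ⟨x, hx, y, hy, hxy, rfl⟩
  have hne : ∀ x ∈ X, ∀ v ∈ V, x ≠ v := by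
    rintro x hx v hv rfl
    exact (hdisj ▸ (⟨hx, hv⟩ : x ∈ X ∩ V) : x ∈ (∅ : Set α))
  -- Two points of `X` in `H` span a line inside `H`.
  have hin : ∀ x ∈ X, ∀ y ∈ X, x ≠ y → x ∈ H → y ∈ H → μ {x, y} ∈ H :=
    fun x hx y hy hxy hxH hyH =>
      hsp _ (hline x hx y hy hxy) x ⟨by simp, hxH⟩ y ⟨by simp, hyH⟩ hxy (by simp)
  -- If the line through `x ∈ H` and `y` had its third point in `H`, then `y` would be in `H`.
  have hmix : ∀ x ∈ X, ∀ y ∈ X, x ≠ y → x ∈ H → μ {x, y} ∈ H → y ∈ H :=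
    fun x hx y hy hxy hxH hm =>
      hsp _ (hline x hx y hy hxy) x ⟨by simp, hxH⟩ _ ⟨by simp, hm⟩
        (hne x hx _ (hμ.mapsTo (hpair x hx y hy hxy))) (by simp)
  -- A line missing `H` at both of its points of `X` must meet `H` at the third.
  have hout : ∀ x ∈ X, ∀ y ∈ X, x ≠ y → x ∉ H → y ∉ H → μ {x, y} ∈ H := by
    intro x hx y hy hxy hxH hyH
    obtain ⟨z, hz, hzH⟩ := hmeet _ (hline x hx y hy hxy)
    rcases hz with rfl | rfl | rfl
    · exact absurd hzH hxH
    · exact absurd hzH hyH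
    · exact hzH
  refine ⟨X ∩ H, X \ H, Set.inter_union_sdiff X H, ?_, ?_⟩
  · ext z
    simp only [Set.mem_inter_iff, Set.mem_sdiff, Set.mem_empty_iff_false]
    tauto
  · apply Set.Subset.antisymm
    · intro z hz
      rcases hsub hz with hzX | hzV
      · exact Or.inl (Or.inl ⟨hzX, hz⟩)
      · obtain ⟨e, ⟨heX, hecard⟩, rfl⟩ := hμ.surjOn hzV
        obtain ⟨x, y, hxy, rfl⟩ := Set.ncard_eq_two.mp hecard
        have hx : x ∈ X := heX (by simp)
        have hy : y ∈ X := heX (by simp)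
        by_cases hxH : x ∈ H
        · have hyH := hmix x hx y hy hxy hxH hz
          refine Or.inl (Or.inr ⟨_, ⟨?_, hecard⟩, rfl⟩)
          rintro w (rfl | rfl)
          exacts [⟨hx, hxH⟩, ⟨hy, hyH⟩]
        · have hyH : y ∉ H := fun hyH =>
            hxH (hmix y hy x hx hxy.symm hyH (by rwa [Set.pair_comm]))
          refine Or.inr ⟨_, ⟨?_, hecard⟩, rfl⟩
          rintro w (rfl | rfl)
          exacts [⟨hx, hxH⟩, ⟨hy, hyH⟩]
    · rintro z ((hz | ⟨e, ⟨he, hecard⟩, rfl⟩) | ⟨e, ⟨he, hecard⟩, rfl⟩)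
      · exact hz.2
      · obtain ⟨x, y, hxy, rfl⟩ := Set.ncard_eq_two.mp hecard
        have hx := he (show x ∈ ({x, y} : Set α) by simp)
        have hy := he (show y ∈ ({x, y} : Set α) by simp)
        exact hin x hx.1 y hy.1 hxy hx.2 hy.2
      · obtain ⟨x, y, hxy, rfl⟩ := Set.ncard_eq_two.mp hecard
        have hx := he (show x ∈ ({x, y} : Set α) by simp)
        have hy := he (show y ∈ ({x, y} : Set α) by simp)
        exact hout x hx.1 y hy.1 hxy hx.2 hy.2
end

section
/- Let 𝔐 = m ⋈^μ_ξ 𝔅 be a system of perspectives and suppose that the sets X_i = {q ∈ ℘₂(W) : i ∈ q}, i ∈ I, are the only subsets on which 𝔐 freely contains a complete K_n-graph. Then for every J ⊆ I and every nonempty A ⊆ X with A ∪ J ≠ W, the set H(A ∪ J | W \ (A ∪ J)) is a hyperplane of 𝔐 if and only if H(A | W \ A) is a hyperplane of 𝔐. -/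
/-- The lines of the system of perspectives `m ⋈^μ_ξ 𝔅`. -/
def perspLines {β : Type*} (X I : Set β) (G : Set (Set (Set β)))
    (μ : β → Set β → Set β) (ξ : β → β → β → β) : Set (Set (Set β)) :=
  G ∪
  {L | ∃ J ⊆ I, J.ncard = 3 ∧ L = pairs J} ∪
  {L | ∃ i ∈ I, ∃ j ∈ I, i ≠ j ∧ ∃ x ∈ X,
      L = {({i, j} : Set β), {x, i}, {ξ i j x, j}}} ∪
  {L | ∃ i ∈ I, ∃ a ∈ X, ∃ b ∈ X, a ≠ b ∧
      L = {({a, i} : Set β), {b, i}, μ i {a, b}}}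

/-- The system of perspectives `m ⋈^μ_ξ 𝔅`, with point set `℘₂(X ∪ I)`. -/
def perspSys {β : Type*} (X I : Set β) (G : Set (Set (Set β)))
    (μ : β → Set β → Set β) (ξ : β → β → β → β) : IncStruct (Set β) :=
  ⟨pairs (X ∪ I), perspLines X I G μ ξ⟩

/-- `X_i = {q ∈ ℘₂(W) : i ∈ q}`. -/
def perspXi {β : Type*} (X I : Set β) (i : β) : Set (Set β) :=
  {q | q ∈ pairs (X ∪ I) ∧ i ∈ q}

/-- The hyperplane condition on a single line: `Y` meets `L`, and contains `L` as soon as it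
contains two of its points. -/
def LineOK {α : Type*} (L Y : Set α) : Prop :=
  (∀ x ∈ L ∩ Y, ∀ y ∈ L ∩ Y, x ≠ y → L ⊆ Y) ∧ (L ∩ Y).Nonempty

lemma isHyperplane_iff {α : Type*} (M : IncStruct α) (Y : Set α) :
    IsHyperplane M Y ↔ Y ⊆ M.pts ∧ Y ≠ M.pts ∧ ∀ L ∈ M.lines, LineOK L Y := by
  unfold IsHyperplane IsSubspace LineOK
  constructor
  · rintro ⟨⟨h1, h2⟩, h3, h4⟩
    exact ⟨h1, h3, fun L hL => ⟨h2 L hL, h4 L hL⟩⟩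
  · rintro ⟨h1, h3, h⟩
    exact ⟨⟨h1, fun L hL => (h L hL).1⟩, h3, fun L hL => (h L hL).2⟩

/-- The iterated equivalence says that an odd number of the three points lie in `Y`. -/
lemma lineOK_triple {α : Type*} {p q r : α} (hpq : p ≠ q) (hpr : p ≠ r) (hqr : q ≠ r)
    (Y : Set α) : LineOK {p, q, r} Y ↔ (p ∈ Y ↔ (q ∈ Y ↔ r ∈ Y)) := by
  have hne : (({p, q, r} : Set α) ∩ Y).Nonempty ↔ p ∈ Y ∨ q ∈ Y ∨ r ∈ Y := by
    simp [Set.Nonempty, or_and_right, exists_or]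
  have hsub : ({p, q, r} : Set α) ⊆ Y ↔ p ∈ Y ∧ q ∈ Y ∧ r ∈ Y := by
    simp [Set.insert_subset_iff]
  unfold LineOK
  rw [hne, hsub]
  constructor
  · rintro ⟨h, h'⟩
    have h1 := fun a b => h p ⟨by simp, a⟩ q ⟨by simp, b⟩ hpq
    have h2 := fun a b => h p ⟨by simp, a⟩ r ⟨by simp, b⟩ hpr
    have h3 := fun a b => h q ⟨by simp, a⟩ r ⟨by simp, b⟩ hqr
    clear h hne hsub
    by_cases p ∈ Y <;> by_cases q ∈ Y <;> by_cases r ∈ Y <;> simp_all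
  · intro h
    refine ⟨?_, ?_⟩
    · rintro x ⟨rfl | rfl | rfl, hx⟩ y ⟨rfl | rfl | rfl, hy⟩ hxy <;>
        first
        | exact absurd rfl hxy
        | simp_all
    · by_cases p ∈ Y <;> by_cases q ∈ Y <;> by_cases r ∈ Y <;> simp_all

lemma lineOK_congr {α : Type*} {L Y Y' : Set α} (h : ∀ x ∈ L, (x ∈ Y ↔ x ∈ Y'))
    (hL : LineOK L Y) : LineOK L Y' := by
  have e : L ∩ Y = L ∩ Y' := by
    ext x
    exact and_congr_right (h x)
  obtain ⟨h1, h2⟩ := hL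
  rw [e] at h1 h2
  exact ⟨fun x hx y hy hxy z hz => (h z hz).1 (h1 x hx y hy hxy hz), h2⟩

lemma pair_mem_hgt {β : Type*} {W B : Set β} {u v : β} (hu : u ∈ W) (hv : v ∈ W)
    (huv : u ≠ v) : ({u, v} : Set β) ∈ Hgt B (W \ B) ↔ (u ∈ B ↔ v ∈ B) := by
  simp only [Hgt, pairs, Set.mem_union, Set.mem_ofPred_eq, Set.ncard_pair huv, and_true,
    Set.insert_subset_iff, Set.singleton_subset_iff, Set.mem_sdiff]
  tauto

lemma hgt_subset {β : Type*} {W B : Set β} (hB : B ⊆ W) : Hgt B (W \ B) ⊆ pairs W := by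
  rintro e (h | h)
  exacts [⟨h.1.trans hB, h.2⟩, ⟨h.1.trans Set.sdiff_subset, h.2⟩]

lemma hgt_ne {β : Type*} {W B : Set β} (hB : B ⊆ W) (hne : B.Nonempty) (hBW : B ≠ W) :
    Hgt B (W \ B) ≠ pairs W := by
  obtain ⟨u, hu⟩ := hne
  obtain ⟨v, hv, hvB⟩ := Set.exists_of_ssubset (hB.ssubset_of_ne hBW)
  have huv : u ≠ v := fun h => hvB (h ▸ hu)
  intro h
  have : ({u, v} : Set β) ∈ pairs W :=
    ⟨Set.insert_subset (hB hu) (Set.singleton_subset_iff.2 hv), Set.ncard_pair huv⟩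
  rw [← h, pair_mem_hgt (hB hu) hv huv] at this
  exact hvB (this.1 hu)

lemma pairs_triple {β : Type*} {i j k : β} (hij : i ≠ j) (hik : i ≠ k) (hjk : j ≠ k) :
    pairs ({i, j, k} : Set β) = {{i, j}, {i, k}, {j, k}} := by
  ext e
  constructor
  · rintro ⟨hs, hc⟩
    obtain ⟨u, v, huv, rfl⟩ := Set.ncard_eq_two.1 hc
    have hu : u ∈ ({i, j, k} : Set β) := hs (by simp)
    have hv : v ∈ ({i, j, k} : Set β) := hs (by simp)
    rcases hu with rfl | rfl | rfl <;> rcases hv with rfl | rfl | rfl <;>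
      simp_all [Set.pair_comm]
  · rintro (rfl | rfl | rfl)
    exacts [⟨by simp [Set.insert_subset_iff], Set.ncard_pair hij⟩,
      ⟨by simp [Set.insert_subset_iff], Set.ncard_pair hik⟩,
      ⟨by simp [Set.insert_subset_iff], Set.ncard_pair hjk⟩]

/-- Whether all lines of a system of perspectives are good for `H(B | W \ B)` depends only on
the trace of `B` on `X`. -/
lemma lineOK_change {β : Type*} {X I : Set β} (hdisj : X ∩ I = ∅) {G : Set (Set (Set β))}
    (hG : ∀ L ∈ G, L ⊆ pairs X) {μ : β → Set β → Set β}
    (hμ : ∀ i ∈ I, Set.MapsTo (μ i) (pairs X) (pairs X)) {ξ : β → β → β → β}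
    (hξ : ∀ i ∈ I, ∀ j ∈ I, Set.MapsTo (ξ i j) X X) {B B' : Set β}
    (hBB : ∀ x ∈ X, (x ∈ B ↔ x ∈ B'))
    (h : ∀ L ∈ perspLines X I G μ ξ, LineOK L (Hgt B ((X ∪ I) \ B))) :
    ∀ L ∈ perspLines X I G μ ξ, LineOK L (Hgt B' ((X ∪ I) \ B')) := by
  have hXI : ∀ x ∈ X, ∀ i ∈ I, x ≠ i := by
    rintro x hx _ hi rfl
    have : x ∈ X ∩ I := ⟨hx, hi⟩
    simp [hdisj] at this
  have hXmem : ∀ e ∈ pairs X, (e ∈ Hgt B ((X ∪ I) \ B) ↔ e ∈ Hgt B' ((X ∪ I) \ B')) := by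
    rintro e ⟨he, hc⟩
    obtain ⟨u, v, huv, rfl⟩ := Set.ncard_eq_two.1 hc
    have hu : u ∈ X := he (by simp)
    have hv : v ∈ X := he (by simp)
    rw [pair_mem_hgt (.inl hu) (.inl hv) huv, pair_mem_hgt (.inl hu) (.inl hv) huv,
      hBB u hu, hBB v hv]
  intro L hL
  have hLB := h L hL
  rcases hL with ((hL | ⟨J, hJ, hJc, rfl⟩) | ⟨i, hi, j, hj, hij, x, hx, rfl⟩) |
    ⟨i, hi, a, ha, b, hb, hab, rfl⟩
  · exact lineOK_congr (fun e he => hXmem e (hG L hL he)) hLB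
  · obtain ⟨i, j, k, hij, hik, hjk, rfl⟩ := Set.ncard_eq_three.1 hJc
    have hi : i ∈ I := hJ (by simp)
    have hj : j ∈ I := hJ (by simp)
    have hk : k ∈ I := hJ (by simp)
    have d1 : ({i, j} : Set β) ≠ {i, k} :=
      ne_of_mem_of_not_mem' (a := j) (by simp) (by simp [hij.symm, hjk])
    have d2 : ({i, j} : Set β) ≠ {j, k} :=
      ne_of_mem_of_not_mem' (a := i) (by simp) (by simp [hij, hik])
    have d3 : ({i, k} : Set β) ≠ {j, k} :=
      ne_of_mem_of_not_mem' (a := i) (by simp) (by simp [hij, hik])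
    rw [pairs_triple hij hik hjk, lineOK_triple d1 d2 d3,
      pair_mem_hgt (.inr hi) (.inr hj) hij, pair_mem_hgt (.inr hi) (.inr hk) hik,
      pair_mem_hgt (.inr hj) (.inr hk) hjk]
    by_cases i ∈ B' <;> by_cases j ∈ B' <;> by_cases k ∈ B' <;> simp_all
  · have hy : ξ i j x ∈ X := hξ i hi j hj hx
    generalize ξ i j x = y at hy hLB ⊢
    have hxi := hXI x hx i hi
    have hxj := hXI x hx j hj
    have hyi := hXI y hy i hi
    have hyj := hXI y hy j hj
    have d1 : ({i, j} : Set β) ≠ {x, i} :=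
      ne_of_mem_of_not_mem' (a := j) (by simp) (by simp [hxj.symm, hij.symm])
    have d2 : ({i, j} : Set β) ≠ {y, j} :=
      ne_of_mem_of_not_mem' (a := i) (by simp) (by simp [hyi.symm, hij])
    have d3 : ({x, i} : Set β) ≠ {y, j} :=
      ne_of_mem_of_not_mem' (a := i) (by simp) (by simp [hyi.symm, hij])
    have hx' := hBB x hx
    have hy' := hBB y hy
    rw [lineOK_triple d1 d2 d3, pair_mem_hgt (.inr hi) (.inr hj) hij,
      pair_mem_hgt (.inl hx) (.inr hi) hxi, pair_mem_hgt (.inl hy) (.inr hj) hyj] at hLB ⊢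
    rw [hx', hy'] at hLB
    clear * - hLB
    grind
  · have hab' : ({a, b} : Set β) ∈ pairs X :=
      ⟨Set.insert_subset ha (Set.singleton_subset_iff.2 hb), Set.ncard_pair hab⟩
    have he := hμ i hi hab'
    generalize μ i {a, b} = e at he hLB ⊢
    have hai := hXI a ha i hi
    have hbi := hXI b hb i hi
    have hie : i ∉ e := fun hie => hXI i (he.1 hie) i hi rfl
    have d1 : ({a, i} : Set β) ≠ {b, i} :=
      ne_of_mem_of_not_mem' (a := a) (by simp) (by simp [hab, hai])
    have d2 : ({a, i} : Set β) ≠ e := fun h => hie (h ▸ (by simp))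
    have d3 : ({b, i} : Set β) ≠ e := fun h => hie (h ▸ (by simp))
    have ha' := hBB a ha
    have hb' := hBB b hb
    have he' := hXmem e he
    rw [lineOK_triple d1 d2 d3, pair_mem_hgt (.inl ha) (.inr hi) hai,
      pair_mem_hgt (.inl hb) (.inr hi) hbi] at hLB ⊢
    rw [ha', hb', he'] at hLB
    clear * - hLB
    grind

/-- In a system of perspectives whose only free complete `K_n`-graphs are
the `X_i`: for `J ⊆ I` and nonempty `A ⊆ X` with `A ∪ J ≠ W`,
`H(A ∪ J | W \ (A ∪ J))` is a hyperplane iff `H(A | W \ A)` is. -/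
theorem stmt_10 {β : Type*} (m n : ℕ) (hm : 1 ≤ m) (hmn : m < n) (X I : Set β)
    (hdisj : X ∩ I = ∅) (hXfin : X.Finite) (hIfin : I.Finite)
    (hXcard : X.ncard = n - m + 1) (hIcard : I.ncard = m)
    (G : Set (Set (Set β))) (hB : IsBConfig (IncStruct.mk (pairs X) G) (n - m + 1))
    (μ : β → Set β → Set β) (hμ : ∀ i ∈ I, Set.BijOn (μ i) (pairs X) (pairs X))
    (ξ : β → β → β → β)
    (hξbij : ∀ i ∈ I, ∀ j ∈ I, Set.BijOn (ξ i j) X X)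
    (hξid : ∀ i ∈ I, ∀ x ∈ X, ξ i i x = x)
    (hξinv : ∀ i ∈ I, ∀ j ∈ I, ∀ x ∈ X, ξ j i (ξ i j x) = x)
    (honly : ∀ Y : Set (Set β),
      (FreelyContains (perspSys X I G μ ξ) Y ∧ Y.ncard = n) ↔ ∃ i ∈ I, Y = perspXi X I i) :
    ∀ J ⊆ I, ∀ A ⊆ X, A.Nonempty → A ∪ J ≠ X ∪ I →
      (IsHyperplane (perspSys X I G μ ξ) (Hgt (A ∪ J) ((X ∪ I) \ (A ∪ J))) ↔
       IsHyperplane (perspSys X I G μ ξ) (Hgt A ((X ∪ I) \ A))) := by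
  intro J hJ A hA hAne hAJ
  have hXI : ∀ x ∈ X, x ∉ I := by
    intro x hx hi
    have : x ∈ X ∩ I := ⟨hx, hi⟩
    simp [hdisj] at this
  have hAW : A ⊆ X ∪ I := hA.trans Set.subset_union_left
  have hAJW : A ∪ J ⊆ X ∪ I := Set.union_subset_union hA hJ
  -- `I` is nonempty because `m ≥ 1`, and it is disjoint from `A`.
  have hAne' : A ≠ X ∪ I := by
    obtain ⟨i, hi⟩ : I.Nonempty := Set.nonempty_of_ncard_ne_zero (by omega)
    intro h
    exact hXI i (hA (h ▸ Or.inr hi)) hi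
  have htr : ∀ x ∈ X, (x ∈ A ∪ J ↔ x ∈ A) := fun x hx =>
    ⟨fun h => h.resolve_right fun hj => hXI x hx (hJ hj), Or.inl⟩
  have hG : ∀ L ∈ G, L ⊆ pairs X := fun L hL => (hB.1.2.1 L hL).1
  have hμ' := fun i hi => (hμ i hi).mapsTo
  have hξ' := fun i hi j hj => (hξbij i hi j hj).mapsTo
  rw [isHyperplane_iff, isHyperplane_iff]
  exact ⟨fun h => ⟨hgt_subset hAW, hgt_ne hAW hAne hAne',
      lineOK_change hdisj hG hμ' hξ' htr h.2.2⟩,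
    fun h => ⟨hgt_subset hAJW, hgt_ne hAJW (hAne.mono Set.subset_union_left) hAJ,
      lineOK_change hdisj hG hμ' hξ' (fun x hx => (htr x hx).symm) h.2.2⟩⟩
end

section
/- Let X be a finite set with |X| = n ≥ 3 and let H ⊆ ℘₂(X). Then H is a hyperplane of the generalized Desargues configuration G(X,2) if and only if there exists a nonempty proper subset Z ⊊ X such that H = H(Z | X \ Z) = ℘₂(Z) ∪ ℘₂(X \ Z). -/
theorem mem_pairs_iff {α : Type*} {Z e : Set α} :
    e ∈ pairs Z ↔ ∃ a ∈ Z, ∃ b ∈ Z, a ≠ b ∧ e = {a, b} := by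
  constructor
  · rintro ⟨hsub, hc⟩
    obtain ⟨a, b, hab, rfl⟩ := Set.ncard_eq_two.1 hc
    exact ⟨a, hsub (by simp), b, hsub (by simp), hab, rfl⟩
  · rintro ⟨a, ha, b, hb, hab, rfl⟩
    exact ⟨Set.pair_subset ha hb, Set.ncard_pair hab⟩

theorem pair_ne_pair {α : Type*} {a b c : α} (hbc : b ≠ c) :
    ({a, b} : Set α) ≠ {a, c} := by
  intro h
  have h1 : b ∈ ({a, c} : Set α) := h ▸ (by simp)
  have h2 : c ∈ ({a, b} : Set α) := h ▸ (by simp)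
  simp only [Set.mem_insert_iff, Set.mem_singleton_iff] at h1 h2
  grind

/-- Two edges of a triangle determine the third, as a closure condition on a family of pairs. -/
def TriClosed {α : Type*} (X : Set α) (H : Set (Set α)) : Prop :=
  ∀ a ∈ X, ∀ b ∈ X, ∀ c ∈ X, a ≠ b → b ≠ c → a ≠ c →
    {a, b} ∈ H → {b, c} ∈ H → {a, c} ∈ H

/-- Every triangle on `X` has an edge in `H`. -/
def TriMeets {α : Type*} (X : Set α) (H : Set (Set α)) : Prop :=
  ∀ a ∈ X, ∀ b ∈ X, ∀ c ∈ X, a ≠ b → b ≠ c → a ≠ c →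
    {a, b} ∈ H ∨ {b, c} ∈ H ∨ {a, c} ∈ H

/-- The hyperplane axioms for `G(X,2)`, read off on the triangles of the complete graph on `X`. -/
theorem isHyperplane_Gdes_iff {α : Type*} {X : Set α} {H : Set (Set α)} (hH : H ⊆ pairs X) :
    IsHyperplane (Gdes X) H ↔
      TriClosed X H ∧ TriMeets X H ∧ ∃ a ∈ X, ∃ b ∈ X, a ≠ b ∧ {a, b} ∉ H := by
  constructor
  · rintro ⟨⟨-, hsub⟩, hne, hmeet⟩
    have line : ∀ a ∈ X, ∀ b ∈ X, ∀ c ∈ X, a ≠ b → b ≠ c → a ≠ c →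
        pairs {a, b, c} ∈ (Gdes X).lines := fun a ha b hb c hc hab hbc hac =>
      ⟨{a, b, c}, by grind, Set.ncard_eq_three.2 ⟨a, b, c, hab, hac, hbc, rfl⟩, rfl⟩
    refine ⟨?_, ?_, ?_⟩
    · intro a ha b hb c hc hab hbc hac h1 h2
      refine hsub _ (line a ha b hb c hc hab hbc hac) {a, b} ⟨?_, h1⟩ {b, c} ⟨?_, h2⟩ ?_ ?_
      · exact mem_pairs_iff.2 ⟨a, by simp, b, by simp, hab, rfl⟩
      · exact mem_pairs_iff.2 ⟨b, by simp, c, by simp, hbc, rfl⟩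
      · rw [Set.pair_comm a b]
        exact pair_ne_pair hac
      · exact mem_pairs_iff.2 ⟨a, by simp, c, by simp, hac, rfl⟩
    · intro a ha b hb c hc hab hbc hac
      obtain ⟨e, he, heH⟩ := hmeet _ (line a ha b hb c hc hab hbc hac)
      obtain ⟨x, hx, y, hy, hxy, rfl⟩ := mem_pairs_iff.1 he
      have := Set.pair_comm x y
      simp only [Set.mem_insert_iff, Set.mem_singleton_iff] at hx hy
      grind
    · by_contra! hall
      refine hne (hH.antisymm fun e he => ?_)
      obtain ⟨a, ha, b, hb, hab, rfl⟩ := mem_pairs_iff.1 he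
      exact hall a ha b hb hab
  · rintro ⟨hclosed, hmeet, a, ha, b, hb, hab, habH⟩
    refine ⟨⟨hH, ?_⟩, ?_, ?_⟩
    · rintro _ ⟨T, hTX, hT, rfl⟩ e₁ ⟨he₁, h₁⟩ e₂ ⟨he₂, h₂⟩ hne e he
      -- Distinct edges `e₁`, `e₂` of the triangle share a vertex `v`; call their other ends `u`, `w`.
      obtain ⟨u, v, w, huT, hvT, hwT, huv, hvw, huw, rfl, rfl, hTeq⟩ : ∃ u v w, u ∈ T ∧ v ∈ T ∧
          w ∈ T ∧ u ≠ v ∧ v ≠ w ∧ u ≠ w ∧ e₁ = {u, v} ∧ e₂ = {v, w} ∧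
          ∀ t ∈ T, t = u ∨ t = v ∨ t = w := by
        obtain ⟨p, q, r, hpq, hpr, hqr, rfl⟩ := Set.ncard_eq_three.1 hT
        obtain ⟨x, hx, y, hy, hxy, rfl⟩ := mem_pairs_iff.1 he₁
        obtain ⟨z, hz, t, ht, hzt, rfl⟩ := mem_pairs_iff.1 he₂
        have c1 := Set.pair_comm x y
        have c2 := Set.pair_comm z t
        by_cases hxz : x = z
        · exact ⟨y, x, t, hy, hx, ht, by grind⟩
        by_cases hxt : x = t
        · exact ⟨y, x, z, hy, hx, hz, by grind⟩
        by_cases hyz : y = z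
        · exact ⟨x, y, t, hx, hy, ht, by grind⟩
        · exact ⟨x, y, z, hx, hy, hz, by grind⟩
      have h3 := hclosed u (hTX huT) v (hTX hvT) w (hTX hwT) huv hvw huw h₁ h₂
      obtain ⟨x, hx, y, hy, hxy, rfl⟩ := mem_pairs_iff.1 he
      have c := Set.pair_comm x y
      have h4 := hTeq x hx
      have h5 := hTeq y hy
      grind
    · intro h
      exact habH (h ▸ mem_pairs_iff.2 ⟨a, ha, b, hb, hab, rfl⟩)
    · rintro _ ⟨T, hTX, hT, rfl⟩
      obtain ⟨p, q, r, hpq, hpr, hqr, rfl⟩ := Set.ncard_eq_three.1 hT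
      rcases hmeet p (hTX (by simp)) q (hTX (by simp)) r (hTX (by simp)) hpq hqr hpr with h | h | h
      · exact ⟨_, mem_pairs_iff.2 ⟨p, by simp, q, by simp, hpq, rfl⟩, h⟩
      · exact ⟨_, mem_pairs_iff.2 ⟨q, by simp, r, by simp, hqr, rfl⟩, h⟩
      · exact ⟨_, mem_pairs_iff.2 ⟨p, by simp, r, by simp, hpr, rfl⟩, h⟩

theorem pair_mem_Hgt {α : Type*} {X Z : Set α} {x y : α} (hx : x ∈ X) (hy : y ∈ X)
    (hxy : x ≠ y) : {x, y} ∈ Hgt Z (X \ Z) ↔ (x ∈ Z ↔ y ∈ Z) := by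
  simp only [Hgt, pairs, Set.mem_union, Set.mem_ofPred_eq, Set.pair_subset_iff, Set.mem_sdiff,
    Set.ncard_pair hxy]
  tauto

/-- `H ⊆ ℘₂(X)` is a hyperplane of `G(X,2)` (`|X| = n ≥ 3`) iff
`H = H(Z | X \ Z)` for a nonempty proper subset `Z ⊊ X`. -/
theorem stmt_13 {α : Type*} (n : ℕ) (hn : 3 ≤ n) (X : Set α)
    (hXfin : X.Finite) (hXcard : X.ncard = n)
    (H : Set (Set α)) (hH : H ⊆ pairs X) :
    IsHyperplane (Gdes X) H ↔
      ∃ Z : Set α, Z ⊆ X ∧ Z.Nonempty ∧ Z ≠ X ∧ H = Hgt Z (X \ Z) := by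
  rw [isHyperplane_Gdes_iff hH]
  constructor
  · rintro ⟨hclosed, hmeet, a, ha, b, hb, hab, habH⟩
    refine ⟨{x | x ∈ X ∧ (x = a ∨ {a, x} ∈ H)}, fun x hx => hx.1, ⟨a, ha, Or.inl rfl⟩, ?_, ?_⟩
    · intro h
      have hbZ := h.symm ▸ hb
      exact hbZ.2.elim (fun h => hab h.symm) habH
    · have key : ∀ x ∈ X, ∀ y ∈ X, x ≠ y → ({x, y} ∈ H ↔
          {x, y} ∈ Hgt {x | x ∈ X ∧ (x = a ∨ {a, x} ∈ H)}
            (X \ {x | x ∈ X ∧ (x = a ∨ {a, x} ∈ H)})) := by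
        intro x hx y hy hxy
        rw [pair_mem_Hgt hx hy hxy]
        simp only [Set.mem_ofPred_eq, hx, hy, true_and]
        have c := Set.pair_comm x y
        have c1 := Set.pair_comm x a
        have c2 := Set.pair_comm y a
        by_cases hxa : x = a
        · grind
        by_cases hya : y = a
        · grind
        -- Transitivity settles everything except `x`, `y` both outside the class of `a`, where `hmeet`
        -- forces `{x, y} ∈ H`.
        have t1 := hclosed a ha x hx y hy (Ne.symm hxa) hxy (Ne.symm hya)
        have t2 := hclosed a ha y hy x hx (Ne.symm hya) hxy.symm (Ne.symm hxa)
        have t3 := hclosed x hx a ha y hy hxa (Ne.symm hya) hxy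
        have m := hmeet a ha x hx y hy (Ne.symm hxa) hxy (Ne.symm hya)
        grind
      ext e
      constructor
      · intro he
        obtain ⟨x, hx, y, hy, hxy, rfl⟩ := mem_pairs_iff.1 (hH he)
        exact (key x hx y hy hxy).1 he
      · intro he
        have he' : e ∈ pairs X :=
          he.elim (fun h => ⟨fun z hz => (h.1 hz).1, h.2⟩) (fun h => ⟨fun z hz => (h.1 hz).1, h.2⟩)
        obtain ⟨x, hx, y, hy, hxy, rfl⟩ := mem_pairs_iff.1 he'
        exact (key x hx y hy hxy).2 he
  · rintro ⟨Z, hZX, ⟨a, ha⟩, hne, rfl⟩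
    refine ⟨?_, ?_, ?_⟩
    · intro a ha b hb c hc hab hbc hac
      rw [pair_mem_Hgt ha hb hab, pair_mem_Hgt hb hc hbc, pair_mem_Hgt ha hc hac]
      exact Iff.trans
    · intro a ha b hb c hc hab hbc hac
      rw [pair_mem_Hgt ha hb hab, pair_mem_Hgt hb hc hbc, pair_mem_Hgt ha hc hac]
      tauto
    · obtain ⟨b, hb, hbZ⟩ := Set.exists_of_ssubset (hZX.ssubset_of_ne hne)
      have hab : a ≠ b := fun h => hbZ (h ▸ ha)
      refine ⟨a, hZX ha, b, hb, hab, ?_⟩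
      rw [pair_mem_Hgt (hZX ha) hb hab]
      tauto
end

section
/- Let ℛ_n be the quasi Grassmannian (with k ≥ 2 and n = 2k or n = 2k+1). For i ∈ X₀ put D(i) = {q ∈ ℘₂(X) : i ∉ q} and let ℛ_n↾D(i) denote the restriction (D(i), {L a line of ℛ_n : L ⊆ D(i)}). Then: (1) if n = 2k+1, the restriction ℛ_{2k+1}↾D(0) is isomorphic to ℛ_{2k} (there is a bijection between the point sets mapping the lines of one structure exactly onto the lines of the other); (2) for every n, the restrictions ℛ_n↾D(1) and ℛ_n↾D(2) are each isomorphic to the generalized Desargues configuration G(X',2) on an (n−1)-element set X'. -/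
/-- `Y = {3, 4, …, 2k}`. -/
def qY (k : ℕ) : Set ℕ := Set.Icc 3 (2 * k)

/-- The lines of the quasi Grassmannian on `X = X₀ ∪ Y`. -/
def qLines (k : ℕ) (X : Set ℕ) : Set (Set (Set ℕ)) :=
  {L | ∃ Z ⊆ X, Z.ncard = 3 ∧ ¬({1, 2} : Set ℕ) ⊆ Z ∧ L = pairs Z} ∪
  {L | ∃ j : ℕ, 1 ≤ j ∧ j ≤ k - 1 ∧
      (L = {({1, 2} : Set ℕ), {1, 2 * j + 2}, {2, 2 * j + 1}} ∨
       L = {({1, 2} : Set ℕ), {1, 2 * j + 1}, {2, 2 * j + 2}})}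

/-- The quasi Grassmannian `ℛ_n` (with `n = 2k` for `X₀ = {1,2}`,
`n = 2k+1` for `X₀ = {0,1,2}`): point set `℘₂(X₀ ∪ Y)`. -/
def qGras (k : ℕ) (X₀ : Set ℕ) : IncStruct (Set ℕ) :=
  ⟨pairs (X₀ ∪ qY k), qLines k (X₀ ∪ qY k)⟩

/-- `D(i) = {q ∈ ℘₂(X) : i ∉ q}` inside the quasi Grassmannian with `X = X₀ ∪ Y`. -/
def qD (k : ℕ) (X₀ : Set ℕ) (i : ℕ) : Set (Set ℕ) :=
  {q | q ∈ pairs (X₀ ∪ qY k) ∧ i ∉ q}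

theorem isIso_of_eq {α : Type*} {M N : IncStruct α} (hp : M.pts = N.pts)
    (hl : M.lines = N.lines) : IsIso M N :=
  ⟨id, hp ▸ Set.bijOn_id _, by simpa using hl⟩

theorem qD_eq (k : ℕ) (X₀ : Set ℕ) (i : ℕ) :
    qD k X₀ i = pairs ((X₀ ∪ qY k) \ {i}) := by
  ext q
  simp only [qD, pairs, Set.mem_ofPred_eq, Set.subset_sdiff, Set.disjoint_singleton_right]
  tauto

theorem pair_mem_pairs {X : Set ℕ} {a b : ℕ} (ha : a ∈ X) (hb : b ∈ X) (hab : a ≠ b) :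
    ({a, b} : Set ℕ) ∈ pairs X :=
  ⟨Set.insert_subset ha (Set.singleton_subset_iff.2 hb), Set.ncard_pair hab⟩

/-- A set with three elements is recovered from its pairs, so `℘₂` reflects inclusions of it. -/
theorem pairs_subset_pairs {Z X : Set ℕ} (hZ : Z.ncard = 3) :
    pairs Z ⊆ pairs X ↔ Z ⊆ X := by
  refine ⟨fun h a ha => ?_, fun h q hq => ⟨hq.1.trans h, hq.2⟩⟩
  obtain ⟨b, hb, hab⟩ := Set.exists_ne_of_one_lt_ncard (by omega : 1 < Z.ncard) a
  exact (h (pair_mem_pairs ha hb hab.symm)).1 (by simp)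

theorem pairs_subset_qD {k : ℕ} {X₀ Z : Set ℕ} {i : ℕ} (hZ : Z.ncard = 3) :
    pairs Z ⊆ qD k X₀ i ↔ Z ⊆ (X₀ ∪ qY k) \ {i} := by
  rw [qD_eq, pairs_subset_pairs hZ]

/-- For `i ∈ {1, 2}` the restriction to `D(i)` is the generalized Desargues configuration on
`X \ {i}`. -/
theorem isIso_restr_Gdes (k : ℕ) (X₀ : Set ℕ) {i : ℕ} (hi : i = 1 ∨ i = 2) :
    IsIso (restr (qGras k X₀) (qD k X₀ i)) (Gdes ((X₀ ∪ qY k) \ {i})) := by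
  have hip : i ∈ ({1, 2} : Set ℕ) := by simpa using hi
  refine isIso_of_eq (qD_eq k X₀ i) ?_
  ext L
  constructor
  · rintro ⟨⟨Z, -, hZ, -, rfl⟩ | ⟨j, -, -, hL⟩, hD⟩
    · exact ⟨Z, (pairs_subset_qD hZ).1 hD, hZ, rfl⟩
    · have hpL : ({1, 2} : Set ℕ) ∈ L := by rcases hL with rfl | rfl <;> simp
      exact absurd hip (hD hpL).2
  · rintro ⟨Z, hZX, hZ, rfl⟩
    exact ⟨Or.inl ⟨Z, fun a ha => (hZX ha).1, hZ, fun h => (hZX (h hip)).2 rfl, rfl⟩,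
      (pairs_subset_qD hZ).2 hZX⟩

theorem union_qY_even {k : ℕ} (hk : 2 ≤ k) : ({1, 2} : Set ℕ) ∪ qY k = Set.Icc 1 (2 * k) := by
  ext a
  simp only [qY, Set.mem_union, Set.mem_insert_iff, Set.mem_singleton_iff, Set.mem_Icc]
  omega

theorem union_qY_odd {k : ℕ} (hk : 2 ≤ k) : ({0, 1, 2} : Set ℕ) ∪ qY k = Set.Icc 0 (2 * k) := by
  ext a
  simp only [qY, Set.mem_union, Set.mem_insert_iff, Set.mem_singleton_iff, Set.mem_Icc]
  omega

theorem odd_diff_zero (k : ℕ) :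
    (({0, 1, 2} : Set ℕ) ∪ qY k) \ {0} = {1, 2} ∪ qY k := by
  ext a
  simp only [qY, Set.mem_union, Set.mem_insert_iff, Set.mem_singleton_iff, Set.mem_Icc,
    Set.mem_sdiff]
  omega

/-- The exceptional lines consist of pairs of elements of `{1, 2} ∪ Y`. -/
theorem exceptional_subset {k j : ℕ} (hk : 2 ≤ k) (hj : 1 ≤ j) (hjk : j ≤ k - 1)
    {L : Set (Set ℕ)}
    (hL : L = {({1, 2} : Set ℕ), {1, 2 * j + 2}, {2, 2 * j + 1}} ∨
      L = {({1, 2} : Set ℕ), {1, 2 * j + 1}, {2, 2 * j + 2}}) :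
    L ⊆ pairs ({1, 2} ∪ qY k) := by
  rw [union_qY_even hk]
  rcases hL with rfl | rfl <;> rintro q (rfl | rfl | rfl) <;>
    exact pair_mem_pairs (Set.mem_Icc.2 (by omega)) (Set.mem_Icc.2 (by omega)) (by omega)

theorem isIso_restr_zero {k : ℕ} (hk : 2 ≤ k) :
    IsIso (restr (qGras k {0, 1, 2}) (qD k {0, 1, 2} 0)) (qGras k {1, 2}) := by
  have hD := qD_eq k {0, 1, 2} 0
  rw [odd_diff_zero] at hD
  refine isIso_of_eq hD ?_
  ext L
  constructor
  · rintro ⟨⟨Z, -, hZ, hp, rfl⟩ | hL, hLD⟩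
    · rw [pairs_subset_qD hZ, odd_diff_zero] at hLD
      exact Or.inl ⟨Z, hLD, hZ, hp, rfl⟩
    · exact Or.inr hL
  · rintro (⟨Z, hZX, hZ, hp, rfl⟩ | ⟨j, hj, hjk, hL⟩)
    · rw [← odd_diff_zero] at hZX
      exact ⟨Or.inl ⟨Z, fun a ha => (hZX ha).1, hZ, hp, rfl⟩, (pairs_subset_qD hZ).2 hZX⟩
    · exact ⟨Or.inr ⟨j, hj, hjk, hL⟩, hD ▸ exceptional_subset hk hj hjk hL⟩

/-- (1) the restriction of `ℛ_{2k+1}` to `D(0)` is isomorphic to `ℛ_{2k}`;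
(2) for `i ∈ {1,2}`, the restrictions of `ℛ_{2k}` and of `ℛ_{2k+1}` to `D(i)` are
isomorphic to the generalized Desargues configuration `G(X',2)` on an `(n-1)`-element
set `X'` (`n - 1 = 2k - 1`, resp. `n - 1 = 2k`). -/
theorem stmt_15 (k : ℕ) (hk : 2 ≤ k) :
    IsIso (restr (qGras k {0, 1, 2}) (qD k {0, 1, 2} 0)) (qGras k {1, 2}) ∧
    (∀ i : ℕ, i = 1 ∨ i = 2 →
      (∃ X' : Set ℕ, X'.Finite ∧ X'.ncard = 2 * k - 1 ∧
        IsIso (restr (qGras k {1, 2}) (qD k {1, 2} i)) (Gdes X')) ∧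
      (∃ X' : Set ℕ, X'.Finite ∧ X'.ncard = 2 * k ∧
        IsIso (restr (qGras k {0, 1, 2}) (qD k {0, 1, 2} i)) (Gdes X'))) := by
  refine ⟨isIso_restr_zero hk, fun i hi => ⟨⟨_, ?_, ?_, isIso_restr_Gdes k _ hi⟩,
    ⟨_, ?_, ?_, isIso_restr_Gdes k _ hi⟩⟩⟩
  · rw [union_qY_even hk]
    exact (Set.finite_Icc _ _).sdiff
  · rw [union_qY_even hk, Set.ncard_sdiff_singleton_of_mem (Set.mem_Icc.2 (by omega)),
      Set.ncard_eq_toFinset_card']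
    simp
  · rw [union_qY_odd hk]
    exact (Set.finite_Icc _ _).sdiff
  · rw [union_qY_odd hk, Set.ncard_sdiff_singleton_of_mem (Set.mem_Icc.2 (by omega)),
      Set.ncard_eq_toFinset_card']
    simp
end
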